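/- arXiv:1201.1393 — 2 statements merged into one kernel-verified Lean document; each statement's English description precedes it below -/
import Mathlib

section
/- Let T be a pretriangulated category admitting countable coproducts and let S be a triangulated subcategory of T that is closed under countable coproducts of its objects. Then S is thick, i.e. closed under direct summands: if a biproduct X ⊕ Y belongs to S, then X belongs to S. -/
open CategoryTheory Limits Pretriangulated

/-! The argument is an Eilenberg swindle. If `X` is a retract of `Z` with idempotent `e`, then
moving the image of `e` in each copy of `Z` in `∐_ℕ Z` to the next copy, while fixing the image of
`1 - e`, is a split monomorphism whose cokernel is the image of `e` in the copy of index `0`, that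
is, `X`. Hence `X` is a cone of an endomorphism of `∐_ℕ Z`. Only the map `1 - e` enters, so no
complement of `X` in `Z` is needed. -/

section Swindle

variable {C : Type*} [Category* C] [Preadditive C] {X Z : C} (h : Retract X Z)
  [HasCoproduct fun _ : ℕ => Z]

/-- The split monomorphism of the Eilenberg swindle: the endomorphism of `∐_ℕ Z` which moves the
image of the idempotent `h.r ≫ h.i` one copy of `Z` up and fixes the image of the complementary
idempotent. -/
noncomputable def swindleMap : (∐ fun _ : ℕ => Z) ⟶ ∐ fun _ : ℕ => Z :=
  Sigma.desc fun n =>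
    h.r ≫ h.i ≫ Sigma.ι (fun _ : ℕ => Z) (n + 1) + (𝟙 Z - h.r ≫ h.i) ≫ Sigma.ι (fun _ : ℕ => Z) n

/-- The projection of `∐_ℕ Z` onto `X` through the copy of `Z` of index `0`: the cokernel of
`swindleMap h`. -/
noncomputable def swindleProjection : (∐ fun _ : ℕ => Z) ⟶ X :=
  Sigma.desc fun
    | 0 => h.r
    | _ + 1 => 0

/-- The retraction of `swindleMap h` which moves the image of `h.r ≫ h.i` one copy of `Z` down,
killing it in the copy of index `0`. -/
noncomputable def swindleRetraction : (∐ fun _ : ℕ => Z) ⟶ ∐ fun _ : ℕ => Z :=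
  Sigma.desc fun
    | 0 => (𝟙 Z - h.r ≫ h.i) ≫ Sigma.ι (fun _ : ℕ => Z) 0
    | n + 1 =>
      h.r ≫ h.i ≫ Sigma.ι (fun _ : ℕ => Z) n + (𝟙 Z - h.r ≫ h.i) ≫ Sigma.ι (fun _ : ℕ => Z) (n + 1)

lemma swindleMap_comp_swindleProjection : swindleMap h ≫ swindleProjection h = 0 := by
  ext (_ | n) <;> simp [swindleMap, swindleProjection]

lemma swindleMap_comp_swindleRetraction : swindleMap h ≫ swindleRetraction h = 𝟙 _ := by
  ext (_ | n) <;> simp [swindleMap, swindleRetraction]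

lemma ι_zero_comp_swindleProjection :
    Sigma.ι (fun _ : ℕ => Z) 0 ≫ swindleProjection h = h.r := by
  simp [swindleProjection]

lemma swindleRetraction_comp_swindleMap_add :
    swindleRetraction h ≫ swindleMap h +
      swindleProjection h ≫ h.i ≫ Sigma.ι (fun _ : ℕ => Z) 0 = 𝟙 _ := by
  ext (_ | n) <;> simp [swindleMap, swindleProjection, swindleRetraction]

/-- The splitting of the short complex `∐_ℕ Z ⟶ ∐_ℕ Z ⟶ X` of the Eilenberg swindle. -/
noncomputable def swindleSplitting :
    (ShortComplex.mk _ _ (swindleMap_comp_swindleProjection h)).Splitting where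
  r := swindleRetraction h
  s := h.i ≫ Sigma.ι (fun _ : ℕ => Z) 0
  f_r := swindleMap_comp_swindleRetraction h
  s_g := by simp [ι_zero_comp_swindleProjection]
  id := by simpa using swindleRetraction_comp_swindleMap_add h

end Swindle

section Pretriangulated

variable {C : Type*} [Category* C] [HasZeroObject C] [HasShift C ℤ] [Preadditive C]
  [∀ n : ℤ, (shiftFunctor C n).Additive] [Pretriangulated C]

lemma distinguished_of_splitting {E : ShortComplex C} (s : E.Splitting) :
    Triangle.mk E.f E.g 0 ∈ distTriang C := by
  have f_comp : E.f ≫ s.isoBinaryBiproduct.hom = biprod.inl := by ext <;> simp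
  have g_eq : E.g = s.isoBinaryBiproduct.hom ≫ biprod.snd := by simp
  exact isomorphic_distinguished _ (binaryBiproductTriangle_distinguished E.X₁ E.X₃) _
    (Triangle.isoMk _ _ (Iso.refl _) s.isoBinaryBiproduct (Iso.refl _)
      (f_comp.trans (Category.id_comp _).symm) ((Category.comp_id _).trans g_eq)
      (zero_comp.trans comp_zero.symm))

theorem thick_of_closed_under_countable_coproducts_general [HasCoproductsOfShape ℕ C]
    (P : ObjectProperty C)
    (cone : ∀ Tr ∈ distTriang C, P Tr.obj₁ → P Tr.obj₂ → P Tr.obj₃)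
    (copower : ∀ Z, P Z → P (∐ fun _ : ℕ => Z)) :
    P.IsStableUnderRetracts where
  of_retract {_ Z} h hZ :=
    cone _ (distinguished_of_splitting (swindleSplitting h)) (copower Z hZ) (copower Z hZ)

end Pretriangulated

/-- A triangulated subcategory of a pretriangulated category which is closed under countable
coproducts is thick: if `X ⊞ Y` belongs to it, then so does `X`. -/
theorem thick_of_closed_under_countable_coproducts {T : Type u} [Category.{v} T]
    [HasZeroObject T] [HasShift T ℤ] [Preadditive T]
    [∀ n : ℤ, (shiftFunctor T n).Additive] [Pretriangulated T]
    [HasBinaryBiproducts T]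
    [∀ (I : Type) [Countable I], HasColimitsOfShape (Discrete I) T]
    (S : Set T)
    (hiso : ∀ X Y : T, (X ≅ Y) → X ∈ S → Y ∈ S)
    (hshift : ∀ X ∈ S, ∀ n : ℤ, X⟦n⟧ ∈ S)
    (htri : ∀ Tr ∈ distTriang T, Tr.obj₁ ∈ S → Tr.obj₂ ∈ S → Tr.obj₃ ∈ S)
    (hcoprod : ∀ (I : Type) [Countable I] (Y : I → T), (∀ i, Y i ∈ S) → (∐ Y) ∈ S)
    (X Y : T) (hXY : (X ⊞ Y) ∈ S) : X ∈ S := by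
  have stable := thick_of_closed_under_countable_coproducts_general (· ∈ S) htri
    fun Z hZ => hcoprod ℕ _ fun _ => hZ
  exact stable.of_retract { i := biprod.inl, r := biprod.fst } hXY
end

section
/- Let C and D be pretriangulated categories, let F : D ⥤ C and G : C ⥤ D be additive functors with an adjunction F ⊣ G, and suppose G is exact (G commutes with the shift and sends distinguished triangles to distinguished triangles). Let (P, X, N, f : P → X, g : X → N, h : N → P⟦1⟧) be a distinguished triangle in C such that for every object W of D, every morphism F(W) → N in C is zero. Then G(f) : G(P) → G(X) is an isomorphism. -/
open CategoryTheory Limits Pretriangulated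

theorem isZero_rightAdjoint_obj_iff {C D : Type*} [Category C] [Category D]
    [HasZeroMorphisms C] [HasZeroMorphisms D] {F : D ⥤ C} {G : C ⥤ D} (adj : F ⊣ G) (Y : C) :
    IsZero (G.obj Y) ↔ ∀ (X : D) (f : F.obj X ⟶ Y), f = 0 := by
  constructor
  · intro hY X f
    exact (adj.homEquiv X Y).injective (hY.eq_of_tgt _ _)
  · intro h
    have hom_ext (X : D) (u v : X ⟶ G.obj Y) : u = v :=
      (adj.homEquiv X Y).symm.injective ((h X _).trans (h X _).symm)
    exact (IsZero.iff_id_eq_zero _).2 (hom_ext _ _ _)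

/-- Let `F ⊣ G` be an adjunction of additive functors between pretriangulated categories with
`G` exact. If `(P, X, N)` is a distinguished triangle in `C` such that every morphism
`F(W) ⟶ N` is zero, then `G(f) : G(P) ⟶ G(X)` is an isomorphism. -/
theorem isIso_map_mor₁_of_orthogonal {C D : Type*} [Category C] [Category D]
    [HasZeroObject C] [HasZeroObject D] [HasShift C ℤ] [HasShift D ℤ]
    [Preadditive C] [Preadditive D]
    [∀ n : ℤ, (shiftFunctor C n).Additive] [∀ n : ℤ, (shiftFunctor D n).Additive]
    [Pretriangulated C] [Pretriangulated D]
    (F : D ⥤ C) (G : C ⥤ D) [F.Additive] [G.Additive]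
    [G.CommShift ℤ] [G.IsTriangulated] (adj : F ⊣ G)
    (Tr : Triangle C) (hTr : Tr ∈ distTriang C)
    (h : ∀ (W : D) (f : F.obj W ⟶ Tr.obj₃), f = 0) :
    IsIso (G.map Tr.mor₁) := by
  have isZero_map_obj₃ : IsZero (G.obj Tr.obj₃) :=
    (isZero_rightAdjoint_obj_iff adj Tr.obj₃).2 h
  exact (Triangle.isZero₃_iff_isIso₁ _ (G.map_distinguished Tr hTr)).1 isZero_map_obj₃
end
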